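/- In H(n,k,p_n) with λ_n = log n + c for fixed c ∈ ℝ, the number of isolated vertices I_n converges in distribution to a Poisson random variable with mean e^{−c}, and consequently X_0 = C(I_n,2) converges in distribution to C(Z,2) with Z ∼ Poisson(e^{−c}). -/

import Mathlib

/-- All `k`-element subsets of `[n]`, the possible hyperedges of a `k`-uniform
hypergraph on `n` vertices. -/
def kSets (n k : ℕ) : Finset (Finset (Fin n)) :=
  (Finset.univ : Finset (Fin n)).powersetCard k

/-- The probability, in the random hypergraph `H(n,k,p)` where each `k`-subset is a
hyperedge independently with probability `p`, of a given edge set `E`. -/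
noncomputable def hweight (n k : ℕ) (p : ℝ) (E : Finset (Finset (Fin n))) : ℝ :=
  if E ⊆ kSets n k then p ^ E.card * (1 - p) ^ ((kSets n k).card - E.card) else 0

open Classical in
/-- The probability of an event `A` under `H(n,k,p)`. -/
noncomputable def hprob (n k : ℕ) (p : ℝ) (A : Finset (Finset (Fin n)) → Prop) : ℝ :=
  ∑ E : Finset (Finset (Fin n)), if A E then hweight n k p E else 0

/-- The expectation of a random variable `f` under `H(n,k,p)`. -/
noncomputable def hexp (n k : ℕ) (p : ℝ) (f : Finset (Finset (Fin n)) → ℝ) : ℝ :=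
  ∑ E : Finset (Finset (Fin n)), hweight n k p E * f E

/-- The star of a vertex `v`: the set of hyperedges of `E` containing `v`. -/
def hstar {n : ℕ} (E : Finset (Finset (Fin n))) (v : Fin n) : Finset (Finset (Fin n)) :=
  E.filter (fun e => v ∈ e)

/-- `X_r`: the number of unordered pairs of (distinct) vertices with identical stars of
size exactly `r` (star-collisions of support size `r`). -/
def Xr (n r : ℕ) (E : Finset (Finset (Fin n))) : ℕ :=
  ((Finset.univ : Finset (Fin n)).powersetCard 2 |>.filter
    (fun P => (∀ u ∈ P, ∀ v ∈ P, hstar E u = hstar E v) ∧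
      ∀ u ∈ P, (hstar E u).card = r)).card

open Filter

/-- The number of isolated vertices (vertices with empty star). -/
def isolatedCount {n : ℕ} (E : Finset (Finset (Fin n))) : ℕ :=
  ((Finset.univ : Finset (Fin n)).filter (fun v => hstar E v = ∅)).card

lemma kSets_card (n k : ℕ) : (kSets n k).card = n.choose k := by
  simp [kSets]

lemma hweight_nonneg {n k : ℕ} {p : ℝ} (h0 : 0 ≤ p) (h1 : p ≤ 1) (E : Finset (Finset (Fin n))) :
    0 ≤ hweight n k p E := by
  have := sub_nonneg.2 h1
  unfold hweight
  split_ifs <;> positivity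

/-- The edge sets contained in `K` have total weight `(1 - p)` to the number of forbidden
hyperedges. -/
lemma sum_hweight_powerset {n k : ℕ} (p : ℝ) {K : Finset (Finset (Fin n))} (hK : K ⊆ kSets n k) :
    ∑ E ∈ K.powerset, hweight n k p E = (1 - p) ^ ((kSets n k).card - K.card) := by
  have h : ∀ E ∈ K.powerset, hweight n k p E =
      p ^ E.card * (1 - p) ^ (K.card - E.card) * (1 - p) ^ ((kSets n k).card - K.card) := by
    intro E hE
    rw [Finset.mem_powerset] at hE
    have h1 := Finset.card_le_card hE
    have h2 := Finset.card_le_card hK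
    rw [hweight, if_pos (hE.trans hK), mul_assoc, ← pow_add]
    congr 2
    omega
  rw [Finset.sum_congr rfl h, ← Finset.sum_mul, Finset.sum_pow_mul_eq_add_pow]
  simp

/-- The set of isolated vertices. -/
def isolatedSet {n : ℕ} (E : Finset (Finset (Fin n))) : Finset (Fin n) :=
  Finset.univ.filter (fun v => hstar E v = ∅)

lemma mem_isolatedSet {n : ℕ} {E : Finset (Finset (Fin n))} {v : Fin n} :
    v ∈ isolatedSet E ↔ ∀ e ∈ E, v ∉ e := by
  simp [isolatedSet, hstar, Finset.filter_eq_empty_iff]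

lemma sum_hweight_subset_isolatedSet {n k : ℕ} (p : ℝ) (S : Finset (Fin n)) :
    ∑ E, (if S ⊆ isolatedSet E then hweight n k p E else 0) =
      (1 - p) ^ (n.choose k - (n - S.card).choose k) := by
  have hK : (Sᶜ).powersetCard k ⊆ kSets n k :=
    Finset.powersetCard_mono (Finset.subset_univ _)
  have h := sum_hweight_powerset p hK
  rw [kSets_card, Finset.card_powersetCard, Finset.card_compl, Fintype.card_fin] at h
  rw [← h, ← Finset.sum_subset (Finset.subset_univ ((Sᶜ).powersetCard k).powerset)]
  · refine Finset.sum_congr rfl fun E hE => if_pos fun v hv => mem_isolatedSet.2 fun e he hve => ?_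
    have := (Finset.mem_powersetCard.1 (Finset.mem_powerset.1 hE he)).1 hve
    simp_all
  · intro E _ hE
    by_cases hS : S ⊆ isolatedSet E
    · rw [if_pos hS, hweight, if_neg]
      refine fun hEk => hE (Finset.mem_powerset.2 fun e he => Finset.mem_powersetCard.2 ⟨?_, ?_⟩)
      · intro v hve
        rw [Finset.mem_compl]
        exact fun hv => mem_isolatedSet.1 (hS hv) e he hve
      · exact (Finset.mem_powersetCard.1 (hEk he)).2
    · rw [if_neg hS]

/-- The binomial moments of the number of isolated vertices. -/
lemma hexp_choose_isolatedCount (n k : ℕ) (p : ℝ) (r : ℕ) :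
    hexp n k p (fun E => ((isolatedCount E).choose r : ℝ)) =
      n.choose r * (1 - p) ^ (n.choose k - (n - r).choose k) := by
  have h : ∀ E : Finset (Finset (Fin n)), hweight n k p E * ((isolatedCount E).choose r : ℝ) =
      ∑ S ∈ (Finset.univ : Finset (Fin n)).powersetCard r,
        if S ⊆ isolatedSet E then hweight n k p E else 0 := by
    intro E
    rw [← Finset.sum_filter, Finset.sum_const, nsmul_eq_mul, mul_comm]
    congr 2
    rw [show isolatedCount E = (isolatedSet E).card from rfl, ← Finset.card_powersetCard]
    congr 1
    ext S
    simp [Finset.mem_powersetCard, and_comm]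
  unfold hexp
  rw [Finset.sum_congr rfl fun E _ => h E, Finset.sum_comm,
    Finset.sum_congr rfl (g := fun _ => (1 - p) ^ (n.choose k - (n - r).choose k))]
  · simp
  · intro S hS
    rw [sum_hweight_subset_isolatedSet, (Finset.mem_powersetCard.1 hS).2]

lemma Xr_zero_eq_choose {n : ℕ} (E : Finset (Finset (Fin n))) :
    Xr n 0 E = (isolatedCount E).choose 2 := by
  rw [show isolatedCount E = (isolatedSet E).card from rfl, ← Finset.card_powersetCard, Xr]
  congr 1
  ext P
  simp only [Finset.mem_filter, Finset.mem_powersetCard, Finset.card_eq_zero, isolatedSet,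
    Finset.subset_iff, Finset.mem_univ, true_and, implies_true]
  refine ⟨fun h => ⟨h.2.2, h.1⟩, fun h => ⟨h.2, fun u hu v hv => ?_, h.1⟩⟩
  rw [h.1 u hu, h.1 v hv]

/-- The Bonferroni error bound for truncated inclusion–exclusion. -/
lemma abs_ite_sub_alternating_sum_choose_le (x m j : ℕ) :
    |(if x = m then (1 : ℝ) else 0) -
        ∑ i ∈ Finset.range (j + 1), (-1) ^ i * (m + i).choose m * (x.choose (m + i) : ℝ)| ≤
      (m + j).choose m * (x.choose (m + j) : ℝ) := by
  have hmul : ∀ i, ((m + i).choose m * x.choose (m + i) : ℝ) = x.choose m * (x - m).choose i := by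
    intro i
    have := Nat.choose_mul (n := x) (k := m + i) (s := m) (Nat.le_add_right _ _)
    rw [Nat.add_sub_cancel_left] at this
    rw [mul_comm]
    exact_mod_cast this
  simp only [mul_assoc, hmul, mul_left_comm _ (x.choose m : ℝ), ← Finset.mul_sum]
  rcases lt_trichotomy x m with h | rfl | h
  · simp [h.ne, Nat.choose_eq_zero_of_lt h]
  · rw [Finset.sum_eq_single 0]
    · simp
    · intro i _ hi
      simp [Nat.choose_eq_zero_of_lt (Nat.pos_of_ne_zero hi)]
    · simp
  · obtain ⟨y, rfl⟩ := Nat.exists_eq_add_of_lt h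
    have hs : ∑ i ∈ Finset.range (j + 1), (-1 : ℝ) ^ i * ((y + 1).choose i : ℝ) =
        (-1) ^ j * y.choose j := by
      exact_mod_cast Int.alternating_sum_range_choose_eq_choose (n := y) (m := j)
    rw [show m + y + 1 - m = y + 1 by omega, hs, if_neg (by omega), zero_sub, abs_neg, abs_mul,
      abs_mul, abs_pow, abs_neg, abs_one, one_pow, one_mul, Nat.abs_cast, Nat.abs_cast]
    gcongr
    omega

lemma hprob_eq_hexp (n k : ℕ) (p : ℝ) (f : Finset (Finset (Fin n)) → ℕ) (m : ℕ) :
    hprob n k p (fun E => f E = m) = hexp n k p (fun E => if f E = m then 1 else 0) := by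
  unfold hprob hexp
  refine Finset.sum_congr rfl fun E _ => ?_
  by_cases h : f E = m <;> simp [h]

lemma abs_hprob_isolatedCount_sub_le {n k : ℕ} {p : ℝ} (h0 : 0 ≤ p) (h1 : p ≤ 1) (m j : ℕ) :
    |hprob n k p (fun E => isolatedCount E = m) -
        ∑ i ∈ Finset.range (j + 1), (-1) ^ i * (m + i).choose m *
          hexp n k p (fun E => ((isolatedCount E).choose (m + i) : ℝ))| ≤
      (m + j).choose m * hexp n k p (fun E => ((isolatedCount E).choose (m + j) : ℝ)) := by
  rw [hprob_eq_hexp]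
  simp only [hexp, Finset.mul_sum]
  rw [Finset.sum_comm, ← Finset.sum_sub_distrib]
  refine (Finset.abs_sum_le_sum_abs _ _).trans (Finset.sum_le_sum fun E _ => ?_)
  have hb := mul_le_mul_of_nonneg_left
    (abs_ite_sub_alternating_sum_choose_le (isolatedCount E) m j) (hweight_nonneg (k := k) h0 h1 E)
  rw [← abs_of_nonneg (hweight_nonneg (k := k) h0 h1 E), ← abs_mul,
    abs_of_nonneg (hweight_nonneg (k := k) h0 h1 E), mul_sub, Finset.mul_sum] at hb
  simpa only [mul_left_comm (hweight n k p E), mul_assoc] using hb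

/-- A sequence sandwiched by truncations whose errors vanish converges. -/
lemma tendsto_of_abs_sub_le {a : ℕ → ℝ} {S T : ℕ → ℕ → ℝ} {s t : ℕ → ℝ} {L : ℝ}
    (h : ∀ᶠ n in atTop, ∀ j, |a n - S j n| ≤ T j n)
    (hS : ∀ j, Tendsto (S j) atTop (nhds (s j))) (hT : ∀ j, Tendsto (T j) atTop (nhds (t j)))
    (hs : Tendsto s atTop (nhds L)) (ht : Tendsto t atTop (nhds 0)) :
    Tendsto a atTop (nhds L) := by
  rw [Metric.tendsto_nhds]
  intro ε hε
  obtain ⟨j, hj1, hj2⟩ := ((Metric.tendsto_nhds.1 hs (ε / 4) (by positivity)).and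
    (Metric.tendsto_nhds.1 ht (ε / 4) (by positivity))).exists
  filter_upwards [h, Metric.tendsto_nhds.1 (hS j) (ε / 4) (by positivity),
    Metric.tendsto_nhds.1 (hT j) (ε / 4) (by positivity)] with n h1 h2 h3
  have h1 := h1 j
  rw [Real.dist_eq, abs_lt] at *
  rw [abs_le] at h1
  constructor <;> linarith [h1.1, h1.2, h2.1, h2.2, h3.1, h3.2, hj1.1, hj1.2, hj2.1, hj2.2]

lemma choose_le_choose_add_mul (s k r : ℕ) :
    (s + r).choose (k + 1) ≤ s.choose (k + 1) + r * (s + r - 1).choose k := by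
  induction r with
  | zero => simp
  | succ r ih =>
    have h : (s + r - 1).choose k ≤ (s + r).choose k := Nat.choose_le_choose _ (by omega)
    have h' := Nat.mul_le_mul_left r h
    rw [← add_assoc, Nat.choose_succ_succ, Nat.add_sub_cancel]
    linarith

lemma choose_add_mul_le (s k r : ℕ) :
    s.choose (k + 2) + r * (s + r - 1).choose (k + 1) ≤
      (s + r).choose (k + 2) + r ^ 2 * (s + r - 2).choose k := by
  induction r with
  | zero => simp
  | succ r ih =>
    have h : (s + r - 2).choose k ≤ (s + r - 1).choose k := Nat.choose_le_choose _ (by omega)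
    have h1 : (s + r).choose (k + 1) ≤ (s + r - 1).choose (k + 1) + (s + r - 1).choose k := by
      rcases Nat.eq_zero_or_pos (s + r) with h0 | h0
      · simp [h0]
      · obtain ⟨q, hq⟩ := Nat.exists_eq_add_of_lt h0
        rw [hq, Nat.choose_succ_succ]
        simp [add_comm]
    have h' := Nat.mul_le_mul_left (r ^ 2) h
    have h1' := Nat.mul_le_mul_left r h1
    rw [← add_assoc, Nat.choose_succ_succ (s + r) (k + 1), Nat.add_sub_cancel,
      show s + r + 1 - 2 = s + r - 1 by omega]
    nlinarith [Nat.zero_le ((s + r - 1).choose k)]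

lemma neg_add_sq_le_log_one_sub {p : ℝ} (h1 : p ≤ 1 / 2) :
    -(p + 2 * p ^ 2) ≤ Real.log (1 - p) := by
  have hp : 0 < 1 - p := by linarith
  refine le_trans ?_ (Real.one_sub_inv_le_log_of_pos hp)
  have : (1 - p)⁻¹ ≤ 1 + (p + 2 * p ^ 2) := by
    rw [inv_le_iff_one_le_mul₀ hp]
    nlinarith [mul_nonneg (sq_nonneg p) (by linarith : 0 ≤ 1 - 2 * p)]
  linarith

/-- Comparison of the log-probability that `r` given vertices are isolated with `-r λ`. -/
lemma abs_mul_log_add_le {C D N p r : ℝ} (hr : 0 ≤ r) (hC : 0 ≤ C) (hp0 : 0 ≤ p)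
    (hp1 : p ≤ 1 / 2) (hD : 1 ≤ D) (hN0 : 0 ≤ N) (hN : N ≤ r * C)
    (hN' : r * C ≤ N + r ^ 2 * D) :
    |N * Real.log (1 - p) + r * (C * p)| ≤ r ^ 2 * (D * p) + 2 * r * (C * p * (D * p)) := by
  have hl := neg_add_sq_le_log_one_sub hp1
  have hu : Real.log (1 - p) ≤ -p := by
    have := Real.log_le_sub_one_of_pos (show 0 < 1 - p by linarith)
    linarith
  have hlN := mul_le_mul_of_nonneg_left hl hN0
  have huN := mul_le_mul_of_nonneg_left hu hN0
  have hq : 0 ≤ p + 2 * p ^ 2 := by positivity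
  have h1 := mul_le_mul_of_nonneg_right hN hq
  have h2 := mul_le_mul_of_nonneg_right hN' hp0
  have h3 : r * (C * p) * p ≤ r * (C * p) * (D * p) :=
    mul_le_mul_of_nonneg_left (by nlinarith) (by positivity)
  have h4 : 0 ≤ r ^ 2 * (D * p) := by positivity
  have h5 : 0 ≤ r * (C * p) * (D * p) := by positivity
  rw [abs_le]
  constructor <;> nlinarith

lemma tendsto_log_add_sq_div (c a : ℝ) :
    Tendsto (fun n : ℕ => a * (Real.log n + c) ^ 2 / ((n : ℝ) - 1)) atTop (nhds 0) := by
  have hid : ∀ j, Tendsto (fun x : ℝ => Real.log x ^ j / x) atTop (nhds 0) := fun j =>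
    (Real.isLittleO_pow_log_id_atTop (n := j)).tendsto_div_nhds_zero
  have h1 : Tendsto (fun x : ℝ => (Real.log x + c) ^ 2 / x) atTop (nhds 0) := by
    have := ((hid 2).add ((hid 1).const_mul (2 * c))).add ((hid 0).const_mul (c ^ 2))
    simp only [mul_zero, add_zero] at this
    refine this.congr fun x => ?_
    ring
  have h2 : Tendsto (fun x : ℝ => x / (x - 1)) atTop (nhds 1) := by
    have := (tendsto_inv_atTop_zero.comp (tendsto_atTop_add_const_right atTop (-1 : ℝ)
      tendsto_id)).const_add 1
    rw [add_zero] at this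
    refine this.congr' ?_
    filter_upwards [eventually_gt_atTop 1] with x hx
    have : x - 1 ≠ 0 := by linarith
    simp only [Function.comp, id, ← sub_eq_add_neg]
    field_simp
    ring
  have h3 := ((h1.mul h2).const_mul a).comp tendsto_natCast_atTop_atTop
  simp only [zero_mul, mul_zero] at h3
  refine h3.congr' ?_
  filter_upwards [eventually_gt_atTop 0] with n hn
  have : (n : ℝ) ≠ 0 := by positivity
  simp only [Function.comp]
  field_simp

section

variable {k : ℕ} {c : ℝ} {p : ℕ → ℝ}

/-- Codegrees vanish in the limit, even when multiplied by the expected degree. -/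
lemma tendsto_degree_mul_codegree {l : ℕ}
    (hlam : ∀ᶠ n in atTop, ((n - 1).choose (l + 1) : ℝ) * p n = Real.log n + c) :
    Tendsto (fun n => ((n - 1).choose (l + 1) : ℝ) * p n * (((n - 2).choose l : ℝ) * p n)) atTop
      (nhds 0) := by
  refine (tendsto_log_add_sq_div c (l + 1)).congr' ?_
  filter_upwards [hlam, eventually_ge_atTop 2] with n hn h2
  obtain ⟨q, rfl⟩ := Nat.exists_eq_add_of_le' h2
  have h : ((q + 1 : ℕ) : ℝ) * q.choose l = (q + 1).choose (l + 1) * ((l + 1 : ℕ) : ℝ) := by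
    exact_mod_cast Nat.add_one_mul_choose_eq q l
  have e1 : q + 2 - 1 = q + 1 := rfl
  have e2 : q + 2 - 2 = q := rfl
  rw [e1] at hn ⊢
  rw [e2, ← hn]
  push_cast at h ⊢
  have hq : (q : ℝ) + 2 - 1 ≠ 0 := by
    have : (0 : ℝ) ≤ q := q.cast_nonneg
    linarith
  rw [div_eq_iff hq]
  linear_combination -((q + 1).choose (l + 1) * p (q + 2) ^ 2 : ℝ) * h

lemma tendsto_hexp_choose_isolatedCount (hk : 2 ≤ k)
    (hp : ∀ᶠ n in atTop, 0 ≤ p n ∧ p n ≤ 1)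
    (hlam : ∀ᶠ n in atTop, ((n - 1).choose (k - 1) : ℝ) * p n = Real.log n + c) (r : ℕ) :
    Tendsto (fun n => hexp n k (p n) (fun E => ((isolatedCount E).choose r : ℝ))) atTop
      (nhds (Real.exp (-c) ^ r / r.factorial)) := by
  obtain ⟨l, rfl⟩ := Nat.exists_eq_add_of_le' hk
  rw [show l + 2 - 1 = l + 1 from rfl] at hlam
  have hCD := tendsto_degree_mul_codegree hlam
  have hC1 : ∀ᶠ n in atTop, 1 ≤ ((n - 1).choose (l + 1) : ℝ) * p n := by
    have : Tendsto (fun n : ℕ => Real.log n + c) atTop atTop :=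
      tendsto_atTop_add_const_right _ _ (Real.tendsto_log_atTop.comp tendsto_natCast_atTop_atTop)
    filter_upwards [hlam, this.eventually_ge_atTop 1] with n h1 h2
    rwa [h1]
  have hD : Tendsto (fun n => ((n - 2).choose l : ℝ) * p n) atTop (nhds 0) := by
    refine squeeze_zero' ?_ ?_ hCD
    · filter_upwards [hp] with n hn
      have := hn.1
      positivity
    · filter_upwards [hp, hC1] with n hn h1
      have := hn.1
      exact le_mul_of_one_le_left (by positivity) h1
  have hD1 : ∀ᶠ n : ℕ in atTop, (1 : ℝ) ≤ (n - 2).choose l := by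
    filter_upwards [eventually_ge_atTop (l + 2)] with n hn
    exact_mod_cast Nat.choose_pos (by omega)
  have hp2 : ∀ᶠ n in atTop, p n ≤ 1 / 2 := by
    filter_upwards [hp, hD1, hD.eventually_le_const (show (0 : ℝ) < 1 / 2 by norm_num)]
      with n hn h1 h2
    exact (le_mul_of_one_le_left hn.1 h1).trans h2
  have hexponent : Tendsto (fun n => ((n.choose (l + 2) - (n - r).choose (l + 2) : ℕ) : ℝ) *
      Real.log (1 - p n) + r * (((n - 1).choose (l + 1) : ℝ) * p n)) atTop (nhds 0) := by
    refine squeeze_zero_norm' ?_ (a := fun n => (r : ℝ) ^ 2 * (((n - 2).choose l : ℝ) * p n) +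
      2 * r * (((n - 1).choose (l + 1) : ℝ) * p n * (((n - 2).choose l : ℝ) * p n))) ?_
    · filter_upwards [hp, hp2, hD1, eventually_ge_atTop r] with n hn h2 h1 hr
      obtain ⟨s, rfl⟩ := Nat.exists_eq_add_of_le' hr
      have e1 : (s + r).choose (l + 2) ≤ s.choose (l + 2) + r * (s + r - 1).choose (l + 1) :=
        choose_le_choose_add_mul s (l + 1) r
      have e2 := choose_add_mul_le s l r
      have e3 : s.choose (l + 2) ≤ (s + r).choose (l + 2) := Nat.choose_le_choose _ (by omega)
      rw [Real.norm_eq_abs, Nat.add_sub_cancel]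
      refine abs_mul_log_add_le (by positivity) (by positivity) hn.1 h2 h1 (by positivity) ?_ ?_
      · exact_mod_cast (by omega : (s + r).choose (l + 2) - s.choose (l + 2) ≤ _)
      · exact_mod_cast (by omega : r * (s + r - 1).choose (l + 1) ≤
          (s + r).choose (l + 2) - s.choose (l + 2) + r ^ 2 * (s + r - 2).choose l)
    · simpa using (hD.const_mul ((r : ℝ) ^ 2)).add (hCD.const_mul (2 * (r : ℝ)))
  have hbinom : Tendsto (fun n : ℕ => (n.choose r : ℝ) * (Real.exp (-c) / n) ^ r) atTop
      (nhds (Real.exp (-c) ^ r / r.factorial)) := by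
    refine ProbabilityTheory.tendsto_choose_mul_pow_atTop r (tendsto_const_nhds.congr' ?_)
    filter_upwards [eventually_gt_atTop 0] with n hn
    have : (n : ℝ) ≠ 0 := by positivity
    field_simp
  have hmul := hbinom.mul ((Real.continuous_exp.tendsto 0).comp hexponent)
  rw [Real.exp_zero, mul_one] at hmul
  refine hmul.congr' ?_
  filter_upwards [hlam, hp2, eventually_gt_atTop 0] with n hn h2 hpos
  have hn0 : (0 : ℝ) < n := by positivity
  rw [hexp_choose_isolatedCount, mul_assoc]
  congr 1
  have hbase : Real.exp (-c) / n = Real.exp (-(((n - 1).choose (l + 1) : ℝ) * p n)) := by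
    rw [hn, neg_add, Real.exp_add, Real.exp_neg (Real.log n), Real.exp_log hn0]
    ring
  rw [hbase, ← Real.exp_nat_mul, Function.comp, ← Real.exp_add]
  rw [show ∀ a b d : ℝ, a * -b + (d + a * b) = d by intros; ring, Real.exp_nat_mul,
    Real.exp_log (by linarith)]

/-- The Poisson limit of the number of isolated vertices. -/
lemma tendsto_hprob_isolatedCount (hk : 2 ≤ k)
    (hp : ∀ᶠ n in atTop, 0 ≤ p n ∧ p n ≤ 1)
    (hlam : ∀ᶠ n in atTop, ((n - 1).choose (k - 1) : ℝ) * p n = Real.log n + c) (m : ℕ) :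
    Tendsto (fun n => hprob n k (p n) (fun E => isolatedCount E = m)) atTop
      (nhds (Real.exp (-Real.exp (-c)) * Real.exp (-c) ^ m / m.factorial)) := by
  have hB := tendsto_hexp_choose_isolatedCount hk hp hlam
  set μ := Real.exp (-c)
  have hterm : ∀ i, ((m + i).choose m : ℝ) * (μ ^ (m + i) / (m + i).factorial) =
      μ ^ m / m.factorial * (μ ^ i / i.factorial) := by
    intro i
    rw [Nat.cast_add_choose]
    have := (m + i).factorial_ne_zero
    field_simp
    ring
  refine tendsto_of_abs_sub_le (hp.mono fun n hn j => abs_hprob_isolatedCount_sub_le hn.1 hn.2 m j)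
    (fun j => tendsto_finsetSum _ fun i _ => (hB (m + i)).const_mul _)
    (fun j => (hB (m + j)).const_mul _) ?_ ?_
  · have h := ((NormedSpace.expSeries_div_hasSum_exp (-μ)).tendsto_sum_nat.comp
      (tendsto_add_atTop_nat 1)).const_mul (μ ^ m / m.factorial)
    rw [← Real.exp_eq_exp_ℝ] at h
    convert h using 2 with j
    · simp only [Function.comp, Finset.mul_sum]
      refine Finset.sum_congr rfl fun i _ => ?_
      rw [mul_assoc, hterm, neg_pow]
      ring
    · ring
  · simp only [hterm]
    simpa using (FloorSemiring.tendsto_pow_div_factorial_atTop μ).const_mul (μ ^ m / m.factorial)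

end

lemma lt_add_two_of_choose_two_eq {z m : ℕ} (h : z.choose 2 = m) : z < m + 2 := by
  rcases z with _ | _ | z
  · omega
  · omega
  · have : (z + 1 + 1).choose 2 = (z + 1) + (z + 1).choose 2 := by
      rw [Nat.choose_succ_succ, Nat.choose_one_right]
    omega

lemma hprob_choose_two (n k : ℕ) (p : ℝ) (f : Finset (Finset (Fin n)) → ℕ) (m : ℕ) :
    hprob n k p (fun E => (f E).choose 2 = m) =
      ∑ z ∈ Finset.range (m + 2), if z.choose 2 = m then hprob n k p (fun E => f E = z) else 0 := by
  simp only [hprob, ← Finset.sum_filter (fun z : ℕ => z.choose 2 = m)]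
  rw [Finset.sum_comm]
  refine Finset.sum_congr rfl fun E _ => ?_
  split_ifs with h
  · refine ((Finset.sum_eq_single (f E) (fun z _ hz => if_neg hz.symm) fun hE => ?_).trans
      (if_pos rfl)).symm
    exact absurd (Finset.mem_filter.2
      ⟨Finset.mem_range.2 (lt_add_two_of_choose_two_eq h), h⟩) hE
  · refine (Finset.sum_eq_zero fun z hz => if_neg ?_).symm
    rintro rfl
    exact h (Finset.mem_filter.1 hz).2

/-- In `H(n,k,p_n)` with `λ_n = log n + c`, the number `I_n` of isolated vertices
converges in distribution to `Poisson(e^{-c})`, and consequently `X_0 = C(I_n, 2)`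
converges in distribution to `C(Z, 2)` with `Z ∼ Poisson(e^{-c})`. -/
theorem stmt15 (k : ℕ) (hk : 2 ≤ k) (c : ℝ) (p : ℕ → ℝ)
    (hp : ∀ᶠ n in atTop, 0 ≤ p n ∧ p n ≤ 1)
    (hlam : ∀ᶠ n in atTop, ((n - 1).choose (k - 1) : ℝ) * p n = Real.log n + c) :
    (∀ m : ℕ,
      Tendsto (fun n => hprob n k (p n) (fun E => isolatedCount E = m)) atTop
        (nhds (Real.exp (-Real.exp (-c)) * Real.exp (-c) ^ m / m.factorial)))
    ∧ (∀ m : ℕ,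
      Tendsto (fun n => hprob n k (p n) (fun E => Xr n 0 E = m)) atTop
        (nhds (∑' z : ℕ, if z.choose 2 = m then
          Real.exp (-Real.exp (-c)) * Real.exp (-c) ^ z / z.factorial else 0))) := by
  have hI := tendsto_hprob_isolatedCount hk hp hlam
  refine ⟨hI, fun m => ?_⟩
  simp only [Xr_zero_eq_choose, hprob_choose_two]
  rw [tsum_eq_sum (s := Finset.range (m + 2))]
  · refine tendsto_finsetSum _ fun z _ => ?_
    split_ifs
    · exact hI z
    · exact tendsto_const_nhds
  · intro z hz
    rw [if_neg fun h => hz (Finset.mem_range.2 (lt_add_two_of_choose_two_eq h))]
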